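/- arXiv:2208.04796 — 3 statements merged into one kernel-verified Lean document; each statement's English description precedes it below -/
import Mathlib

section
/- Convolution of normal and exponential tails, balanced case: let X be standard normal and E standard exponential, independent; let (η_N) and (x_N) be sequences with η_N > 0, x_N → ∞, and x_N/η_N → ∞, and let μ > 0, c ∈ ℝ. If (x_N − μη_N²)/(√2·η_N) → c as N→∞, then P(η_N·X + E/μ > x_N) is asymptotically equivalent, as N→∞, to (η_N/(√(2π)·x_N))·exp(−x_N²/(2η_N²)) + (1/2)·exp((μ/2)·(μη_N² − 2x_N))·(1 + erf(c)). -/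
open MeasureTheory ProbabilityTheory Filter Real Set Topology Asymptotics

noncomputable section

/-- The Gauss error function `erf x = (2/√π) ∫_0^x e^{-t²} dt`. -/
def erf (x : ℝ) : ℝ := (2 / Real.sqrt π) * ∫ t in (0 : ℝ)..x, Real.exp (-t ^ 2)

lemma expMeasure_Ioi_aux (y : ℝ) :
    expMeasure 1 (Ioi y) = ENNReal.ofReal (Real.exp (-max 0 y)) := by
  haveI := isProbabilityMeasure_expMeasure (r := 1) one_pos
  have h := cdf_expMeasure_eq (r := 1) one_pos y
  rw [cdf_eq_real] at h
  have h2 : (expMeasure 1).real (Ioi y) = 1 - (expMeasure 1).real (Iic y) := by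
    rw [← compl_Iic, probReal_compl_eq_one_sub measurableSet_Iic]
  rw [← ofReal_measureReal, h2, h]
  congr 1
  split_ifs with h0
  · rw [max_eq_right h0]; simp
  · rw [max_eq_left (le_of_not_ge h0)]; simp

lemma prob_eq_aux
    {Ω : Type*} [MeasureSpace Ω] [IsProbabilityMeasure (ℙ : Measure Ω)]
    (X E : Ω → ℝ)
    (hX : Measure.map X (ℙ : Measure Ω) = gaussianReal 0 1)
    (hE : Measure.map E (ℙ : Measure Ω) = expMeasure 1)
    (hXE : IndepFun X E (ℙ : Measure Ω)) (η x μ : ℝ) (hμ : 0 < μ) :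
    (ℙ {ω | η * X ω + E ω / μ > x}).toReal
      = ∫ s, Real.exp (-max 0 (μ * (x - η * s))) ∂(gaussianReal 0 1) := by
  haveI := isProbabilityMeasure_expMeasure (r := 1) one_pos
  have hXm : AEMeasurable X ℙ := by
    apply AEMeasurable.of_map_ne_zero
    rw [hX]; exact IsProbabilityMeasure.ne_zero _
  have hEm : AEMeasurable E ℙ := by
    apply AEMeasurable.of_map_ne_zero
    rw [hE]; exact IsProbabilityMeasure.ne_zero _
  have hp := (indepFun_iff_map_prod_eq_prod_map_map hXm hEm).1 hXE
  rw [hX, hE] at hp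
  have hs : MeasurableSet {p : ℝ × ℝ | x < η * p.1 + p.2 / μ} :=
    measurableSet_lt (by fun_prop) (by fun_prop)
  have h1 : (ℙ : Measure Ω) {ω | η * X ω + E ω / μ > x}
      = ∫⁻ s, ENNReal.ofReal (Real.exp (-max 0 (μ * (x - η * s)))) ∂(gaussianReal 0 1) := by
    have : {ω | η * X ω + E ω / μ > x}
        = (fun ω ↦ (X ω, E ω)) ⁻¹' {p : ℝ × ℝ | x < η * p.1 + p.2 / μ} := rfl
    rw [this, ← Measure.map_apply_of_aemeasurable (hXm.prodMk hEm) hs, hp,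
      Measure.prod_apply hs]
    refine lintegral_congr fun s => ?_
    rw [← expMeasure_Ioi_aux]
    congr 1
    ext t
    simp only [mem_preimage, mem_setOf_eq, mem_Ioi]
    rw [← sub_lt_iff_lt_add', lt_div_iff₀ hμ, mul_comm]
  rw [h1, integral_eq_lintegral_of_nonneg_ae]
  · exact ae_of_all _ fun s => (Real.exp_pos _).le
  · exact Continuous.aestronglyMeasurable (by fun_prop)

lemma prob_eq_aux2 (η x μ : ℝ) (hη : 0 < η) :
    ∫ s, Real.exp (-max 0 (μ * (x - η * s))) ∂(gaussianReal 0 1)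
      = Real.exp (μ / 2 * (μ * η ^ 2 - 2 * x)) *
        ∫ u, gaussianPDFReal 0 1 u *
          Real.exp (min 0 (μ * η * ((x - μ * η ^ 2) / η - u))) := by
  rw [integral_gaussianReal_eq_integral_smul one_ne_zero, ← integral_const_mul,
    ← integral_add_right_eq_self _ (μ * η)]
  refine integral_congr_ae (ae_of_all _ fun u => ?_)
  simp only [gaussianPDFReal_def, smul_eq_mul, NNReal.coe_one, mul_one, sub_zero]
  have e : μ * η * ((x - μ * η ^ 2) / η - u) = μ * (x - η * (u + μ * η)) := by
    field_simp
    ring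
  rw [e]
  set w := μ * (x - η * (u + μ * η)) with hw
  have hm : -max 0 w = min 0 w - w := by
    rcases le_total 0 w with h | h
    · rw [max_eq_right h, min_eq_left h]; ring
    · rw [max_eq_left h, min_eq_right h]; ring
  rw [hm, mul_left_comm, mul_assoc, ← Real.exp_add, ← Real.exp_add, mul_assoc, ← Real.exp_add]
  congr 2
  rw [hw]; ring

lemma erf_aux (c : ℝ) :
    ∫ u in Iic (Real.sqrt 2 * c), gaussianPDFReal 0 1 u = 1 / 2 * (1 + erf c) := by
  have hs2 : Real.sqrt 2 ^ 2 = 2 := Real.sq_sqrt (by norm_num)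
  have hi := integrable_gaussianPDFReal 0 1
  have h0 : ∫ u in Iic (0 : ℝ), gaussianPDFReal 0 1 u = 1 / 2 := by
    have h1 : ∫ u in Iic (0 : ℝ), gaussianPDFReal 0 1 u
        = ∫ u in Ioi (0 : ℝ), gaussianPDFReal 0 1 u := by
      have := integral_comp_neg_Iic 0 (gaussianPDFReal 0 1)
      rw [neg_zero] at this
      rw [← this]
      simp [gaussianPDFReal_def]
    have h2 := integral_add_compl (μ := volume) (measurableSet_Iic (a := (0 : ℝ))) hi
    rw [compl_Iic, ← h1, integral_gaussianPDFReal_eq_one 0 one_ne_zero] at h2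
    linarith
  have h3 := intervalIntegral.integral_Iic_sub_Iic (μ := volume) (a := 0)
    (b := Real.sqrt 2 * c) hi.integrableOn hi.integrableOn
  have h4 := intervalIntegral.smul_integral_comp_mul_left (a := 0) (b := c)
    (gaussianPDFReal 0 1) (Real.sqrt 2)
  rw [mul_zero, ← h3, h0] at h4
  have h5 : (fun t => gaussianPDFReal 0 1 (Real.sqrt 2 * t))
      = fun t => (Real.sqrt (2 * π))⁻¹ * Real.exp (-t ^ 2) := by
    funext t
    simp only [gaussianPDFReal_def, NNReal.coe_one, mul_one, sub_zero, mul_pow, hs2]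
    congr 2
    ring
  rw [h5, intervalIntegral.integral_const_mul, smul_eq_mul] at h4
  rw [Real.sqrt_mul (by norm_num) π] at h4
  have h6 : Real.sqrt 2 ≠ 0 := by positivity
  have h7 : Real.sqrt π ≠ 0 := by positivity
  rw [erf]
  have h8 : Real.sqrt 2 * ((Real.sqrt 2 * Real.sqrt π)⁻¹ * ∫ t in (0 : ℝ)..c, Real.exp (-t ^ 2))
      = 1 / 2 * (2 / Real.sqrt π * ∫ t in (0 : ℝ)..c, Real.exp (-t ^ 2)) := by
    field_simp
  rw [h8] at h4
  linarith

lemma erf_pos_aux (c : ℝ) : 0 < 1 / 2 * (1 + erf c) := by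
  rw [← erf_aux, setIntegral_pos_iff_support_of_nonneg_ae]
  · have : Function.support (gaussianPDFReal 0 1) = univ := by
      ext u
      simp [(gaussianPDFReal_pos 0 1 u one_ne_zero).ne']
    rw [this, univ_inter]
    simp
  · exact ae_of_all _ fun u => gaussianPDFReal_nonneg 0 1 u
  · exact (integrable_gaussianPDFReal 0 1).integrableOn

lemma limit_aux (b m : ℕ → ℝ) (β : ℝ) (hb : Tendsto b atTop (𝓝 β))
    (hm : Tendsto m atTop atTop) :
    Tendsto (fun N => ∫ u, gaussianPDFReal 0 1 u * Real.exp (min 0 (m N * (b N - u)))) atTop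
      (𝓝 (∫ u in Iic β, gaussianPDFReal 0 1 u)) := by
  rw [← integral_indicator measurableSet_Iic]
  refine tendsto_integral_of_dominated_convergence (gaussianPDFReal 0 1) ?_
    (integrable_gaussianPDFReal 0 1) ?_ ?_
  · intro N
    exact ((measurable_gaussianPDFReal 0 1).mul (by fun_prop)).aestronglyMeasurable
  · intro N
    refine ae_of_all _ fun u => ?_
    rw [norm_mul, Real.norm_of_nonneg (gaussianPDFReal_nonneg 0 1 u),
      Real.norm_of_nonneg (Real.exp_pos _).le]
    exact mul_le_of_le_one_right (gaussianPDFReal_nonneg 0 1 u)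
      (Real.exp_le_one_iff.2 (min_le_left _ _))
  · have hne : ∀ᵐ u : ℝ, u ≠ β := by
      simp [ae_iff]
    filter_upwards [hne] with u hu
    have hbu : Tendsto (fun N => b N - u) atTop (𝓝 (β - u)) := hb.sub_const u
    rcases lt_or_gt_of_ne hu with h | h
    · rw [indicator_of_mem (show u ∈ Iic β from h.le)]
      have ht : Tendsto (fun N => m N * (b N - u)) atTop atTop :=
        hm.atTop_mul_pos (sub_pos.2 h) hbu
      refine tendsto_const_nhds.congr' ?_
      filter_upwards [ht.eventually_ge_atTop 0] with N hN
      rw [min_eq_left hN]; simp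
    · rw [indicator_of_notMem (show u ∉ Iic β from not_le.2 h)]
      have ht : Tendsto (fun N => m N * (b N - u)) atTop atBot :=
        hm.atTop_mul_neg (sub_neg.2 h) hbu
      have h2 := (Real.tendsto_exp_atBot.comp ht).const_mul (gaussianPDFReal 0 1 u)
      rw [mul_zero] at h2
      refine h2.congr' ?_
      filter_upwards [ht.eventually_le_atBot 0] with N hN
      rw [min_eq_right hN]; rfl

/-- **Convolution of normal and exponential tails, balanced case.** If
`(x_N - μ η_N²)/(√2 η_N) → c`, then `ℙ(η_N X + E/μ > x_N)` is asymptotically equivalent to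
`η_N e^{-x_N²/(2η_N²)}/(√(2π) x_N) + (1/2) e^{(μ/2)(μη_N² - 2x_N)} (1 + erf c)`. -/
theorem convolution_normal_exponential_balanced
    {Ω : Type*} [MeasureSpace Ω] [IsProbabilityMeasure (ℙ : Measure Ω)]
    (X E : Ω → ℝ)
    (hX : Measure.map X (ℙ : Measure Ω) = gaussianReal 0 1)
    (hE : Measure.map E (ℙ : Measure Ω) = expMeasure 1)
    (hXE : IndepFun X E (ℙ : Measure Ω))
    (η x : ℕ → ℝ) (hη : ∀ N, 0 < η N)
    (hx : Tendsto x atTop atTop)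
    (hxη : Tendsto (fun N => x N / η N) atTop atTop)
    (μ : ℝ) (hμ : 0 < μ) (c : ℝ)
    (hc : Tendsto (fun N => (x N - μ * (η N) ^ 2) / (Real.sqrt 2 * η N)) atTop (𝓝 c)) :
    (fun N : ℕ => (ℙ {ω | η N * X ω + E ω / μ > x N}).toReal) ~[atTop]
      (fun N : ℕ =>
        η N * Real.exp (-(x N) ^ 2 / (2 * (η N) ^ 2)) / (Real.sqrt (2 * π) * x N)
          + 1 / 2 * Real.exp (μ / 2 * (μ * (η N) ^ 2 - 2 * x N)) * (1 + erf c)) := by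
  have h2 : 0 < Real.sqrt 2 := by positivity
  have hs2 : Real.sqrt 2 ^ 2 = 2 := Real.sq_sqrt (by norm_num)
  have hb : Tendsto (fun N => (x N - μ * (η N) ^ 2) / η N) atTop (𝓝 (Real.sqrt 2 * c)) := by
    refine (hc.const_mul (Real.sqrt 2)).congr fun N => ?_
    have := (hη N).ne'
    field_simp
  have hm : Tendsto (fun N => μ * η N) atTop atTop := by
    refine (hxη.atTop_add hb.neg).congr fun N => ?_
    have := (hη N).ne'
    field_simp
    ring
  have hlim := limit_aux _ _ _ hb hm
  rw [erf_aux] at hlim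
  have hL := erf_pos_aux c
  set L := 1 / 2 * (1 + erf c) with hLdef
  have hP : ∀ N, (ℙ {ω | η N * X ω + E ω / μ > x N}).toReal =
      Real.exp (μ / 2 * (μ * (η N) ^ 2 - 2 * x N)) * ∫ u, gaussianPDFReal 0 1 u *
          Real.exp (min 0 (μ * η N * ((x N - μ * η N ^ 2) / η N - u))) := fun N => by
    rw [prob_eq_aux X E hX hE hXE _ _ _ hμ, prob_eq_aux2 _ _ _ (hη N)]
  have hR : ∀ N, η N * Real.exp (-(x N) ^ 2 / (2 * (η N) ^ 2)) / (Real.sqrt (2 * π) * x N)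
          + 1 / 2 * Real.exp (μ / 2 * (μ * (η N) ^ 2 - 2 * x N)) * (1 + erf c)
      = Real.exp (μ / 2 * (μ * (η N) ^ 2 - 2 * x N)) *
        ((Real.sqrt (2 * π))⁻¹ * (x N / η N)⁻¹ *
          Real.exp (-((x N - μ * (η N) ^ 2) / (Real.sqrt 2 * η N)) ^ 2) + L) := fun N => by
    have hne := (hη N).ne'
    have e : -(x N) ^ 2 / (2 * (η N) ^ 2) = μ / 2 * (μ * (η N) ^ 2 - 2 * x N)
        + -((x N - μ * (η N) ^ 2) / (Real.sqrt 2 * η N)) ^ 2 := by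
      rw [div_pow, mul_pow, hs2]
      field_simp
      ring
    rw [e, Real.exp_add, hLdef, inv_div, div_eq_mul_inv, mul_inv, div_eq_mul_inv (η N)]
    ring
  have hr : Tendsto (fun N => (Real.sqrt (2 * π))⁻¹ * (x N / η N)⁻¹ *
      Real.exp (-((x N - μ * (η N) ^ 2) / (Real.sqrt 2 * η N)) ^ 2) + L) atTop (𝓝 L) := by
    have h1 := (hxη.inv_tendsto_atTop.const_mul (Real.sqrt (2 * π))⁻¹)
    have h3 := (h1.mul ((Real.continuous_exp.tendsto _).comp (hc.pow 2).neg)).add_const L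
    simpa using h3
  simp only [hP, hR]
  apply IsEquivalent.mul IsEquivalent.refl
  exact ((isEquivalent_const_iff_tendsto hL.ne').2 hlim).trans
    ((isEquivalent_const_iff_tendsto hL.ne').2 hr).symm

end
end

section
/- Convolution of normal and exponential tails, exponential-dominated case: let X be standard normal and E standard exponential, independent; let (η_N) and (x_N) be sequences with η_N > 0, x_N → ∞, and x_N/η_N → ∞, and let μ > 0. If (x_N − μη_N²)/(√2·η_N) → −∞ as N→∞, then P(η_N·X + E/μ > x_N) is asymptotically equivalent, as N→∞, to (η_N/(√(2π)·x_N))·exp(−x_N²/(2η_N²)) − (1/√(2π))·exp((μ/2)·(μη_N² − 2x_N))·(η_N/(x_N − μη_N²))·exp(−(x_N − μη_N²)²/(2η_N²)). -/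
open MeasureTheory ProbabilityTheory Filter Real Set Topology Asymptotics

noncomputable section

def phi (t : ℝ) : ℝ := (Real.sqrt (2 * π))⁻¹ * Real.exp (-t ^ 2 / 2)
def Qt (t : ℝ) : ℝ := ∫ s in Ioi t, phi s

lemma gpdf (t : ℝ) : gaussianPDFReal 0 1 t = phi t := by
  simp [gaussianPDFReal, phi]

lemma phi_pos (t : ℝ) : 0 < phi t := by
  unfold phi; positivity

lemma phi_cont : Continuous phi := by
  unfold phi; fun_prop

lemma phi_int : Integrable phi := by
  have := integrable_gaussianPDFReal 0 1
  simpa only [funext gpdf] using this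

lemma phi_deriv (t : ℝ) : HasDerivAt phi (-t * phi t) t := by
  unfold phi
  have h : HasDerivAt (fun s : ℝ => -s ^ 2 / 2) (-t) t := by
    have := ((hasDerivAt_pow 2 t).neg.div_const 2)
    convert! this using 1
    simp; ring
  convert! (h.exp.const_mul ((Real.sqrt (2 * π))⁻¹)) using 1
  ring

lemma Qt_eq (t : ℝ) : Qt t = Qt 0 - ∫ s in (0 : ℝ)..t, phi s := by
  unfold Qt
  have h := intervalIntegral.integral_Iic_sub_Iic (f := phi) (μ := volume) (a := 0) (b := t)
    phi_int.integrableOn phi_int.integrableOn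
  have h1 := intervalIntegral.integral_Iic_add_Ioi (f := phi) (μ := volume) (b := t)
    phi_int.integrableOn phi_int.integrableOn
  have h2 := intervalIntegral.integral_Iic_add_Ioi (f := phi) (μ := volume) (b := 0)
    phi_int.integrableOn phi_int.integrableOn
  linarith

lemma Qt_deriv (t : ℝ) : HasDerivAt Qt (-phi t) t := by
  have h : HasDerivAt (fun u => ∫ s in (0 : ℝ)..u, phi s) (phi t) t :=
    phi_cont.integral_hasStrictDerivAt 0 t |>.hasDerivAt
  have := h.const_sub (Qt 0)
  exact this.congr_of_eventuallyEq (Eventually.of_forall Qt_eq)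

lemma Qt_tendsto : Tendsto Qt atTop (𝓝 0) := by
  have h := intervalIntegral_tendsto_integral_Ioi 0 phi_int.integrableOn tendsto_id
  have := h.const_sub (Qt 0)
  rw [show Qt 0 - ∫ x in Ioi 0, phi x = 0 from sub_self _] at this
  exact this.congr (fun t => (Qt_eq t).symm)

lemma phi_tendsto : Tendsto phi atTop (𝓝 0) := by
  unfold phi
  rw [show (0:ℝ) = (Real.sqrt (2 * π))⁻¹ * 0 by simp]
  refine Tendsto.const_mul _ (tendsto_exp_atBot.comp ?_)
  refine Tendsto.atBot_div_const two_pos ?_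
  exact tendsto_neg_atTop_atBot.comp (tendsto_pow_atTop two_ne_zero)

lemma mills : Tendsto (fun t => Qt t / (phi t / t)) atTop (𝓝 1) := by
  refine HasDerivAt.lhopital_zero_atTop (f' := fun t => -phi t)
    (g' := fun t => -phi t * (1 + (t⁻¹) ^ 2))
    (Eventually.of_forall Qt_deriv) ?_ ?_ Qt_tendsto ?_ ?_
  · filter_upwards [eventually_gt_atTop 0] with t ht
    convert! (phi_deriv t).div (hasDerivAt_id t) ht.ne' using 1
    simp; field_simp; ring
  · filter_upwards with t
    have := phi_pos t
    exact mul_ne_zero (by linarith) (by positivity)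
  · simpa [div_eq_mul_inv] using phi_tendsto.mul tendsto_inv_atTop_zero
  · have : Tendsto (fun t : ℝ => (1 + (t⁻¹) ^ 2)⁻¹) atTop (𝓝 1) := by
      have := ((tendsto_inv_atTop_zero (𝕜 := ℝ)).pow 2).const_add 1 |>.inv₀ (by simp)
      simpa using this
    refine this.congr (fun t => ?_)
    have := phi_pos t
    field_simp

lemma mills_equiv : Qt ~[atTop] (fun t => phi t / |t|) := by
  have h : Qt ~[atTop] (fun t => phi t / t) := by
    rw [isEquivalent_iff_tendsto_one]
    · exact mills
    · filter_upwards [eventually_gt_atTop 0] with t ht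
      exact (div_pos (phi_pos t) ht).ne'
  refine h.congr_right ?_
  filter_upwards [eventually_gt_atTop 0] with t ht
  rw [abs_of_pos ht]

lemma exp_tail (c : ℝ) : expMeasure 1 (Ioi c) = ENNReal.ofReal (if 0 ≤ c then exp (-c) else 1) := by
  have := isProbabilityMeasure_expMeasure one_pos
  rw [← compl_Iic, prob_compl_eq_one_sub measurableSet_Iic, ← ofReal_cdf, cdf_expMeasure_eq one_pos,
    ← ENNReal.ofReal_one, ← ENNReal.ofReal_sub]
  · congr 1
    split_ifs <;> simp
  · split_ifs <;> simp_all

lemma prob_formula {Ω : Type*} [MeasureSpace Ω] [IsProbabilityMeasure (ℙ : Measure Ω)]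
    (X E : Ω → ℝ)
    (hX : Measure.map X (ℙ : Measure Ω) = gaussianReal 0 1)
    (hE : Measure.map E (ℙ : Measure Ω) = expMeasure 1)
    (hXE : IndepFun X E (ℙ : Measure Ω)) (η x μ : ℝ) (hη : 0 < η) (hμ : 0 < μ) :
    (ℙ {ω | η * X ω + E ω / μ > x}).toReal =
      Qt (x / η) + exp (μ / 2 * (μ * η ^ 2 - 2 * x)) * Qt (μ * η - x / η) := by
  have := isProbabilityMeasure_expMeasure one_pos
  have mX : AEMeasurable X (ℙ : Measure Ω) := by
    apply AEMeasurable.of_map_ne_zero; rw [hX]; exact IsProbabilityMeasure.ne_zero _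
  have mE : AEMeasurable E (ℙ : Measure Ω) := by
    apply AEMeasurable.of_map_ne_zero; rw [hE]; exact IsProbabilityMeasure.ne_zero _
  have hprod := (indepFun_iff_map_prod_eq_prod_map_map mX mE).1 hXE
  rw [hX, hE] at hprod
  have hS : MeasurableSet {p : ℝ × ℝ | η * p.1 + p.2 / μ > x} :=
    measurableSet_lt measurable_const (by fun_prop)
  set g : ℝ → ℝ := fun t => if t ≤ x / η then exp (-(μ * (x - η * t))) else 1 with hg
  have hgm : Measurable g := by
    refine Measurable.ite measurableSet_Iic (by fun_prop) (by fun_prop)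
  have hg0 : ∀ t, 0 ≤ g t := by
    intro t; simp only [hg]; split_ifs <;> positivity
  have hg1 : ∀ t, g t ≤ 1 := by
    intro t; simp only [hg]; split_ifs with h
    · rw [exp_le_one_iff]
      rw [le_div_iff₀ hη] at h
      have : 0 ≤ μ * (x - η * t) := mul_nonneg hμ.le (by linarith)
      linarith
    · exact le_rfl
  have h1 : ℙ {ω | η * X ω + E ω / μ > x} = ∫⁻ t, ENNReal.ofReal (g t) ∂(gaussianReal 0 1) := by
    have : ℙ {ω | η * X ω + E ω / μ > x}
        = (Measure.map (fun ω => (X ω, E ω)) ℙ) {p : ℝ × ℝ | η * p.1 + p.2 / μ > x} := by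
      rw [Measure.map_apply_of_aemeasurable (mX.prodMk mE) hS]; rfl
    rw [this, hprod, Measure.prod_apply hS]
    refine lintegral_congr (fun t => ?_)
    have : Prod.mk t ⁻¹' {p : ℝ × ℝ | η * p.1 + p.2 / μ > x} = Ioi (μ * (x - η * t)) := by
      ext e
      simp only [mem_preimage, mem_ofPred_eq, mem_Ioi, gt_iff_lt]
      rw [← sub_lt_iff_lt_add', lt_div_iff₀ hμ, mul_comm]
    rw [this, exp_tail]
    congr 1
    have : 0 ≤ μ * (x - η * t) ↔ t ≤ x / η := by
      rw [mul_nonneg_iff_of_pos_left hμ, le_div_iff₀ hη, sub_nonneg, mul_comm]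
    simp only [hg, this]
  have hgi : Integrable (fun t => phi t * g t) := by
    refine phi_int.mono' (phi_cont.measurable.mul hgm).aestronglyMeasurable ?_
    filter_upwards with t
    rw [norm_of_nonneg (mul_nonneg (phi_pos t).le (hg0 t))]
    exact mul_le_of_le_one_right (phi_pos t).le (hg1 t)
  rw [h1, ← integral_eq_lintegral_of_nonneg_ae (Eventually.of_forall hg0) hgm.aestronglyMeasurable,
    integral_gaussianReal_eq_integral_smul one_ne_zero]
  simp only [gpdf, smul_eq_mul]
  rw [← intervalIntegral.integral_Iic_add_Ioi (b := x / η) hgi.integrableOn hgi.integrableOn,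
    add_comm]
  congr 1
  · refine setIntegral_congr_fun measurableSet_Ioi (fun t ht => ?_)
    simp only [hg, if_neg (not_le.2 (mem_Ioi.1 ht)), mul_one]
  · have h2 : ∫ t in Iic (x / η), phi t * g t = ∫ t in Iic (x / η),
        exp (μ / 2 * (μ * η ^ 2 - 2 * x)) * phi (μ * η - t) := by
      refine setIntegral_congr_fun measurableSet_Iic (fun t ht => ?_)
      simp only [hg, if_pos (show t ≤ x / η from ht), phi]
      rw [mul_assoc, ← exp_add, mul_left_comm, ← exp_add]
      congr 2
      ring
    rw [h2, integral_const_mul]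
    congr 1
    rw [Qt, ← integral_indicator measurableSet_Iic, ← integral_Ici_eq_integral_Ioi,
      ← integral_indicator measurableSet_Ici, ← integral_sub_left_eq_self _ volume (μ * η)]
    congr 1
    ext t
    simp only [indicator, mem_Iic, mem_Ici]
    have : μ * η - t ≤ x / η ↔ μ * η - x / η ≤ t := by constructor <;> intro <;> linarith
    simp [this]

theorem convolution_normal_exponential_exponential_dominated
    {Ω : Type*} [MeasureSpace Ω] [IsProbabilityMeasure (ℙ : Measure Ω)]
    (X E : Ω → ℝ)
    (hX : Measure.map X (ℙ : Measure Ω) = gaussianReal 0 1)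
    (hE : Measure.map E (ℙ : Measure Ω) = expMeasure 1)
    (hXE : IndepFun X E (ℙ : Measure Ω))
    (η x : ℕ → ℝ) (hη : ∀ N, 0 < η N)
    (hx : Tendsto x atTop atTop)
    (hxη : Tendsto (fun N => x N / η N) atTop atTop)
    (μ : ℝ) (hμ : 0 < μ)
    (hc : Tendsto (fun N => (x N - μ * (η N) ^ 2) / (Real.sqrt 2 * η N)) atTop atBot) :
    (fun N : ℕ => (ℙ {ω | η N * X ω + E ω / μ > x N}).toReal) ~[atTop]
      (fun N : ℕ =>
        η N * Real.exp (-(x N) ^ 2 / (2 * (η N) ^ 2)) / (Real.sqrt (2 * π) * x N)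
          - 1 / Real.sqrt (2 * π) * Real.exp (μ / 2 * (μ * (η N) ^ 2 - 2 * x N)) *
            (η N / (x N - μ * (η N) ^ 2)) *
            Real.exp (-(x N - μ * (η N) ^ 2) ^ 2 / (2 * (η N) ^ 2))) := by
  have hb : Tendsto (fun N => μ * η N - x N / η N) atTop atTop := by
    have h := (tendsto_neg_atBot_atTop.comp hc).const_mul_atTop (show 0 < Real.sqrt 2 by positivity)
    refine h.congr (fun N => ?_)
    have := hη N
    simp only [Function.comp]
    field_simp
    ring
  have e1 := mills_equiv.comp_tendsto hxη
  have e2 := mills_equiv.comp_tendsto hb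
  have e3 := (IsEquivalent.refl (l := atTop)
    (u := fun N : ℕ => exp (μ / 2 * (μ * (η N) ^ 2 - 2 * x N)))).mul e2
  have key := IsEquivalent.add_add_of_nonneg
    (fun N => div_nonneg (phi_pos _).le (abs_nonneg _))
    (fun N => mul_nonneg (exp_pos _).le (div_nonneg (phi_pos _).le (abs_nonneg _))) e1 e3
  have hL : (fun N : ℕ => (ℙ {ω | η N * X ω + E ω / μ > x N}).toReal) =
      (Qt ∘ fun N => x N / η N) + ((fun N => rexp (μ / 2 * (μ * η N ^ 2 - 2 * x N))) *
        Qt ∘ fun N => μ * η N - x N / η N) := by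
    ext N
    exact prob_formula X E hX hE hXE (η N) (x N) μ (hη N) hμ
  rw [hL]
  refine key.congr_right ?_
  filter_upwards [hxη.eventually_gt_atTop 0, hb.eventually_gt_atTop 0] with N h1 h2
  have h0 := hη N
  simp only [Pi.add_apply, Pi.mul_apply, Function.comp, abs_of_pos h1, abs_of_pos h2, phi]
  have q1 : -(x N / η N) ^ 2 / 2 = -(x N) ^ 2 / (2 * (η N) ^ 2) := by field_simp
  have q2 : -(μ * η N - x N / η N) ^ 2 / 2 = -(x N - μ * (η N) ^ 2) ^ 2 / (2 * (η N) ^ 2) := by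
    field_simp; ring
  have q3 : η N / (x N - μ * (η N) ^ 2) = -(μ * η N - x N / η N)⁻¹ := by
    have : x N - μ * (η N) ^ 2 = -(η N * (μ * η N - x N / η N)) := by field_simp; ring
    rw [this, div_neg, div_mul_eq_div_div, div_self h0.ne', one_div]
  rw [q1, q2, q3]
  have hs : Real.sqrt (2 * π) ≠ 0 := by positivity
  generalize exp (-(x N) ^ 2 / (2 * (η N) ^ 2)) = A
  generalize exp (-(x N - μ * (η N) ^ 2) ^ 2 / (2 * (η N) ^ 2)) = B
  generalize exp (μ / 2 * (μ * (η N) ^ 2 - 2 * x N)) = C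
  simp only [div_eq_mul_inv, mul_inv, inv_inv, one_mul]
  ring

end
end

section
/- Interchange of limit and integral for the scaled hitting-time density: fix a>0, r∈ℝ, β>0, σ>0, σ_A>0 and define g_N as the density of the hitting time τ_i(a,−r). Then lim_{N→∞} ∫_{−∞}^{∞} N·√(log N)·g_N(T_N(a,k)) dk = ∫_{−∞}^{∞} lim_{N→∞} N·√(log N)·g_N(T_N(a,k)) dk, and both sides equal exp(2(1−λ(a))βr/σ²). -/
open MeasureTheory Filter Real Set Topology

noncomputable section

/-- The threshold `f_N(a) = (σ²/(2β) + a) log N`. -/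
def fN (β σ a : ℝ) (N : ℕ) : ℝ := (σ ^ 2 / (2 * β) + a) * Real.log N

/-- `λ(a) = 1 - σ/√(2aβ + σ²)`. -/
def lam (β σ a : ℝ) : ℝ := 1 - σ / Real.sqrt (2 * a * β + σ ^ 2)

/-- `T_N(a,k) = f_N(a)/β + k √(log N)`. -/
def TN (β σ a : ℝ) (N : ℕ) (k : ℝ) : ℝ := fN β σ a N / β + k * Real.sqrt (Real.log N)

/-- The density of the first hitting time
`τ_i(a,-r) = inf{t > 0 : W_i(t) - (1-λ(a))βt > (1-λ(a))f_N(a) - r}`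
of a Brownian motion with standard deviation `σ`:
`g_N(t) = ((1-λ(a))f_N(a) - r)/(√(2π) σ t^{3/2})
  · exp(-((1-λ(a))f_N(a) - r + (1-λ(a))βt)²/(2σ²t))`. -/
def hittingDensity (β σ a r : ℝ) (N : ℕ) (t : ℝ) : ℝ :=
  ((1 - lam β σ a) * fN β σ a N - r) / (Real.sqrt (2 * π) * σ * t ^ ((3 : ℝ) / 2)) *
    Real.exp (-((1 - lam β σ a) * fN β σ a N - r + (1 - lam β σ a) * β * t) ^ 2 /
      (2 * σ ^ 2 * t))

/-- The rescaled density, as a function of `x = √(log N)`. -/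
def Gx (q b r σ x k : ℝ) : ℝ :=
  (q * b - r / x ^ 2) / (Real.sqrt (2 * π) * σ) * ((b + k / x)⁻¹) ^ ((3 : ℝ) / 2) *
    Real.exp (-((r / x + q * k) ^ 2 * (b + k / x)⁻¹ / (2 * σ ^ 2)))

lemma rpow_neg_zero {t : ℝ} (ht : t ≤ 0) : t ^ ((3 : ℝ) / 2) = 0 := by
  rcases ht.lt_or_eq with h | h
  · rw [Real.rpow_def_of_neg h]
    have : Real.cos ((3 : ℝ) / 2 * π) = 0 := by
      have : (3 : ℝ) / 2 * π = π / 2 + π := by ring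
      rw [this, Real.cos_add_pi, Real.cos_pi_div_two, neg_zero]
    rw [this, mul_zero]
  · rw [h]; exact Real.zero_rpow (by norm_num)

set_option maxHeartbeats 1000000 in
lemma Gx_bound (q b r σ : ℝ) (hq : 0 < q) (hb : 0 < b) (hσ : 0 < σ) :
    ∃ C κ X : ℝ, 0 < κ ∧ ∀ x, X ≤ x → ∀ k, ‖Gx q b r σ x k‖ ≤ C * Real.exp (-κ * |k|) := by
  obtain ⟨κ, hκ⟩ : ∃ κ, κ = q ^ 2 / (4 * σ ^ 2) := ⟨_, rfl⟩
  have hκ0 : 0 < κ := by rw [hκ]; positivity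
  set S := Real.sqrt (2 * π) * σ with hS
  have hS0 : 0 < S := by positivity
  set M := 1 + 2 / b + 4 / b ^ 2 with hM
  have hM0 : 0 < M := by positivity
  set m := κ / 8 with hm
  have hm0 : 0 < m := by positivity
  refine ⟨(q * b + |r|) / S * (M * (1 + 1 / m)) ^ 2 * Real.exp (κ * b / 4) * Real.exp (κ * b / 4),
    κ / 4, 1 + 4 * r ^ 2 / (σ ^ 2 * b ^ 2 * κ), by positivity, ?_⟩
  intro x hx k
  have hx1 : 1 ≤ x := by
    have : 0 ≤ 4 * r ^ 2 / (σ ^ 2 * b ^ 2 * κ) := by positivity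
    linarith
  have hx0 : 0 < x := by linarith
  rcases le_or_gt (b + k / x) 0 with hy | hy
  · have : Gx q b r σ x k = 0 := by
      unfold Gx
      rw [rpow_neg_zero (inv_nonpos.2 hy)]; ring
    rw [this, norm_zero]; positivity
  unfold Gx
  obtain ⟨y, hyd⟩ : ∃ y, y = (b + k / x)⁻¹ := ⟨_, rfl⟩
  rw [← hyd, ← hS]
  have hy0 : 0 < y := by rw [hyd]; positivity
  have hy1 : y * (b + k / x) = 1 := by rw [hyd]; exact inv_mul_cancel₀ hy.ne'
  have hky : k * y = x * (1 - b * y) := by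
    field_simp at hy1
    nlinarith
  set z := k ^ 2 * y with hz
  have hz0 : 0 ≤ z := by positivity
  -- bound on y
  have hyz : y ≤ 2 / b + 4 / b ^ 2 * z := by
    rcases le_or_gt (b * y) 2 with h | h
    · have : y ≤ 2 / b := by rw [le_div_iff₀ hb]; linarith
      have : 0 ≤ 4 / b ^ 2 * z := by positivity
      linarith
    · have h1 : b * y / 2 ≤ b * y - 1 := by linarith
      have h2 : b * y / 2 ≤ x * (b * y - 1) := by nlinarith
      have h3 : (b * y / 2) ^ 2 ≤ (k * y) ^ 2 := by
        rw [hky]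
        have : (x * (1 - b * y)) ^ 2 = (x * (b * y - 1)) ^ 2 := by ring
        rw [this]
        exact pow_le_pow_left₀ (by positivity) h2 2
      have h4 : b ^ 2 / 4 ≤ k ^ 2 := by
        have : b ^ 2 / 4 * y ^ 2 ≤ k ^ 2 * y ^ 2 := by nlinarith
        exact le_of_mul_le_mul_right this (by positivity)
      have h5 : y ≤ 4 / b ^ 2 * z := by
        rw [hz, div_mul_eq_mul_div, le_div_iff₀ (by positivity)]
        nlinarith
      have : 0 ≤ 2 / b := by positivity
      linarith
  have hzk : |k| - b ≤ z := by
    have h1 : k / x ≤ |k| := (div_le_div_of_nonneg_right (le_abs_self k) hx0.le).trans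
      (div_le_self (abs_nonneg k) hx1)
    have h2 : 1 ≤ y * (b + |k|) := by
      rw [← hy1]; gcongr
    have h3 : (|k| - b) * (b + |k|) ≤ z * (b + |k|) := by
      have : |k| ^ 2 = k ^ 2 := sq_abs k
      have : z * (b + |k|) = k ^ 2 * (y * (b + |k|)) := by rw [hz]; ring
      nlinarith [sq_nonneg k, sq_nonneg b]
    exact le_of_mul_le_mul_right h3 (by positivity)
  -- prefactor
  have hpre : |(q * b - r / x ^ 2) / S| ≤ (q * b + |r|) / S := by
    rw [abs_div, abs_of_pos hS0]
    gcongr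
    refine (abs_sub _ _).trans ?_
    rw [abs_of_pos (by positivity : 0 < q * b), abs_div, abs_of_pos (by positivity : 0 < x ^ 2)]
    gcongr
    exact div_le_self (abs_nonneg r) (one_le_pow₀ hx1)
  have hpow : y ^ ((3 : ℝ) / 2) ≤ (M * (1 + 1 / m)) ^ 2 * Real.exp (κ / 4 * z) := by
    have h1 : y ^ ((3 : ℝ) / 2) ≤ (1 + y) ^ 2 := by
      calc y ^ ((3 : ℝ) / 2) ≤ (1 + y) ^ ((3 : ℝ) / 2) := by
            apply Real.rpow_le_rpow hy0.le (by linarith) (by norm_num)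
        _ ≤ (1 + y) ^ (2 : ℝ) := by
            apply Real.rpow_le_rpow_of_exponent_le (by linarith) (by norm_num)
        _ = _ := by norm_cast
    have h2 : 1 + y ≤ M * (1 + z) := by
      have h' : 0 ≤ 2 / b * z := by positivity
      have : 0 ≤ 4 / b ^ 2 := by positivity
      rw [hM]; nlinarith
    have h3 : 1 + z ≤ (1 + 1 / m) * Real.exp (m * z) := by
      have e : (1 + 1 / m) * (m * z + 1) = 1 + z + m * z + 1 / m := by field_simp; ring
      have : (1 + 1 / m) * (m * z + 1) ≤ (1 + 1 / m) * Real.exp (m * z) := by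
        gcongr; exact Real.add_one_le_exp _
      have : 0 ≤ m * z := by positivity
      have : 0 ≤ 1 / m := by positivity
      linarith
    have h4 : 1 + y ≤ M * (1 + 1 / m) * Real.exp (m * z) := by
      rw [mul_assoc]
      exact h2.trans (by gcongr)
    calc _ ≤ _ := h1
      _ ≤ (M * (1 + 1 / m) * Real.exp (m * z)) ^ 2 := by gcongr
      _ = _ := by
        rw [mul_pow, ← Real.exp_nat_mul]; congr 2; rw [hm]; push_cast; ring
  have hexp : -((r / x + q * k) ^ 2 * y / (2 * σ ^ 2)) ≤ κ * b / 4 - κ / 2 * z := by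
    have h1 : q ^ 2 * k ^ 2 / 2 - r ^ 2 / x ^ 2 ≤ (r / x + q * k) ^ 2 := by
      have : r ^ 2 / x ^ 2 = (r / x) ^ 2 := by rw [div_pow]
      rw [this]; nlinarith [sq_nonneg (2 * (r / x) + q * k)]
    have h2 : r ^ 2 / x ^ 2 ≤ σ ^ 2 * κ * b ^ 2 / 4 := by
      have : 4 * r ^ 2 / (σ ^ 2 * b ^ 2 * κ) ≤ x ^ 2 :=
        le_trans (by linarith) (le_self_pow₀ hx1 two_ne_zero)
      rw [div_le_iff₀ (by positivity)] at this
      rw [div_le_iff₀ (by positivity)]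
      linarith
    have h3 : q ^ 2 = 4 * σ ^ 2 * κ := by rw [hκ]; field_simp
    have h4 : (4 * σ ^ 2 * κ * k ^ 2 / 2 - σ ^ 2 * κ * b ^ 2 / 4) * y ≤ (r / x + q * k) ^ 2 * y := by
      gcongr
      rw [← h3]; linarith
    have h5 : (κ * k ^ 2 - κ * b ^ 2 / 8) * y ≤ (r / x + q * k) ^ 2 * y / (2 * σ ^ 2) := by
      rw [le_div_iff₀ (by positivity)]
      refine le_trans (le_of_eq ?_) h4
      ring
    have h6 : κ * b ^ 2 / 8 * y ≤ κ * b / 4 + κ / 2 * z := by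
      calc _ ≤ κ * b ^ 2 / 8 * (2 / b + 4 / b ^ 2 * z) := by gcongr
        _ = _ := by field_simp; ring
    have h7 : κ * k ^ 2 * y = κ * z := by rw [hz]; ring
    have h8 : (κ * k ^ 2 - κ * b ^ 2 / 8) * y = κ * k ^ 2 * y - κ * b ^ 2 / 8 * y := by ring
    linarith
  rw [norm_mul, norm_mul, Real.norm_eq_abs, Real.norm_eq_abs, Real.norm_eq_abs,
    abs_of_nonneg (Real.rpow_nonneg hy0.le _), abs_of_pos (Real.exp_pos _)]
  calc _ ≤ (q * b + |r|) / S * ((M * (1 + 1 / m)) ^ 2 * Real.exp (κ / 4 * z)) *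
        Real.exp (κ * b / 4 - κ / 2 * z) := by gcongr
    _ = (q * b + |r|) / S * (M * (1 + 1 / m)) ^ 2 * Real.exp (κ * b / 4) * Real.exp (-(κ / 4 * z)) := by
        have : Real.exp (κ / 4 * z) * Real.exp (κ * b / 4 - κ / 2 * z)
          = Real.exp (κ * b / 4) * Real.exp (-(κ / 4 * z)) := by
          rw [← Real.exp_add, ← Real.exp_add]; congr 1; ring
        linear_combination (q * b + |r|) / S * (M * (1 + 1 / m)) ^ 2 * this
    _ ≤ (q * b + |r|) / S * (M * (1 + 1 / m)) ^ 2 * Real.exp (κ * b / 4) *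
        (Real.exp (κ * b / 4) * Real.exp (-(κ / 4) * |k|)) := by
        rw [← Real.exp_add (κ * b / 4) (-(κ / 4) * |k|)]
        gcongr
        nlinarith
    _ = _ := by ring

lemma Gx_tendsto (q b r σ k : ℝ) (hb : 0 < b) :
    Tendsto (fun x => Gx q b r σ x k) atTop
      (𝓝 (q * b / (Real.sqrt (2 * π) * σ) * (b⁻¹) ^ ((3 : ℝ) / 2) *
        Real.exp (-((q * k) ^ 2 * b⁻¹ / (2 * σ ^ 2))))) := by
  have h1 : Tendsto (fun x : ℝ => r / x) atTop (𝓝 0) := tendsto_id.const_div_atTop r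
  have h2 : Tendsto (fun x : ℝ => k / x) atTop (𝓝 0) := tendsto_id.const_div_atTop k
  have h3 : Tendsto (fun x : ℝ => r / x ^ 2) atTop (𝓝 0) :=
    (tendsto_pow_atTop two_ne_zero).const_div_atTop r
  have hy : Tendsto (fun x : ℝ => (b + k / x)⁻¹) atTop (𝓝 b⁻¹) := by
    have := (h2.const_add b).inv₀ (by simpa using hb.ne')
    simpa using this
  have hp : Tendsto (fun x : ℝ => ((b + k / x)⁻¹) ^ ((3 : ℝ) / 2)) atTop
      (𝓝 ((b⁻¹) ^ ((3 : ℝ) / 2))) := hy.rpow_const (Or.inr (by norm_num))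
  have ha : Tendsto (fun x : ℝ => (q * b - r / x ^ 2) / (Real.sqrt (2 * π) * σ)) atTop
      (𝓝 (q * b / (Real.sqrt (2 * π) * σ))) := by
    have := (h3.const_sub (q * b)).div_const (Real.sqrt (2 * π) * σ)
    simpa using this
  have he : Tendsto (fun x : ℝ => -((r / x + q * k) ^ 2 * (b + k / x)⁻¹ / (2 * σ ^ 2))) atTop
      (𝓝 (-((q * k) ^ 2 * b⁻¹ / (2 * σ ^ 2)))) := by
    have := ((((h1.add_const (q * k)).pow 2).mul hy).div_const (2 * σ ^ 2)).neg
    simpa using this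
  exact (ha.mul hp).mul ((Real.continuous_exp.tendsto _).comp he)

lemma integrable_exp_neg_mul_abs {κ : ℝ} (hκ : 0 < κ) :
    Integrable (fun k : ℝ => Real.exp (-κ * |k|)) := by
  have h1 : IntegrableOn (fun k : ℝ => Real.exp (-κ * |k|)) (Ioi 0) := by
    refine (exp_neg_integrableOn_Ioi 0 hκ).congr_fun (fun k hk => ?_) measurableSet_Ioi
    simp only [abs_of_pos (show 0 < k from hk)]
  have h2 : IntegrableOn (fun k : ℝ => Real.exp (-κ * |k|)) (Iic 0) := by
    refine (integrableOn_exp_mul_Iic hκ 0).congr_fun (fun k hk => ?_) measurableSet_Iic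
    simp only [abs_of_nonpos (show k ≤ 0 from hk)]
    congr 1; ring
  rw [← integrableOn_univ, ← Iic_union_Ioi (a := (0 : ℝ))]
  exact h2.union h1

lemma Gx_limit_integral (q b σ : ℝ) (hq : 0 < q) (hb : 0 < b) (hσ : 0 < σ) :
    ∫ k : ℝ, (q * b / (Real.sqrt (2 * π) * σ) * (b⁻¹) ^ ((3 : ℝ) / 2) *
        Real.exp (-((q * k) ^ 2 * b⁻¹ / (2 * σ ^ 2)))) = 1 := by
  rw [integral_const_mul]
  have : ∀ k : ℝ, -((q * k) ^ 2 * b⁻¹ / (2 * σ ^ 2)) = -(q ^ 2 * b⁻¹ / (2 * σ ^ 2)) * k ^ 2 := by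
    intro k; ring
  simp_rw [this]
  rw [integral_gaussian]
  have h1 : π / (q ^ 2 * b⁻¹ / (2 * σ ^ 2)) = (2 * π) * b * (σ / q) ^ 2 := by field_simp
  rw [h1, Real.sqrt_mul (by positivity : 0 ≤ 2 * π * b) ((σ / q) ^ 2),
    Real.sqrt_mul (by positivity : 0 ≤ 2 * π) b, Real.sqrt_sq (by positivity)]
  have h2 : (b⁻¹) ^ ((3 : ℝ) / 2) = b⁻¹ * (Real.sqrt b)⁻¹ := by
    rw [show (3 : ℝ) / 2 = 1 + 1 / 2 by norm_num, Real.rpow_add (by positivity), Real.rpow_one,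
      ← Real.sqrt_eq_rpow, Real.sqrt_inv]
  rw [h2]
  have : 0 < Real.sqrt b := Real.sqrt_pos.2 hb
  have : 0 < Real.sqrt (2 * π) := by positivity
  generalize Real.sqrt (2 * π) = u at *
  generalize Real.sqrt b = v at *
  field_simp

lemma density_eq (a r β σ : ℝ) (ha : 0 < a) (hβ : 0 < β) (hσ : 0 < σ) (N : ℕ) (hN : 2 ≤ N)
    (k : ℝ) :
    (N : ℝ) * Real.sqrt (Real.log N) * hittingDensity β σ a r N (TN β σ a N k) =
      Real.exp (2 * (1 - lam β σ a) * β * r / σ ^ 2) *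
        Gx ((1 - lam β σ a) * β) ((2 * a * β + σ ^ 2) / (2 * β ^ 2)) r σ
          (Real.sqrt (Real.log N)) k := by
  have hN1 : (1 : ℝ) < N := by exact_mod_cast hN
  have hl : 0 < Real.log N := Real.log_pos hN1
  obtain ⟨x, hx⟩ : ∃ x, x = Real.sqrt (Real.log N) := ⟨_, rfl⟩
  have hx0 : 0 < x := by rw [hx]; exact Real.sqrt_pos.2 hl
  have hlx : Real.log N = x ^ 2 := by rw [hx, Real.sq_sqrt hl.le]
  have hNx : (N : ℝ) = Real.exp (x ^ 2) := by rw [← hlx, Real.exp_log (by linarith)]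
  obtain ⟨c, hc⟩ : ∃ c, c = 1 - lam β σ a := ⟨_, rfl⟩
  have hD : 0 < 2 * a * β + σ ^ 2 := by positivity
  have hcD : c ^ 2 * (2 * a * β + σ ^ 2) = σ ^ 2 := by
    rw [hc, lam, sub_sub_cancel, div_pow, Real.sq_sqrt hD.le]; field_simp
  obtain ⟨b, hb⟩ : ∃ b, b = (2 * a * β + σ ^ 2) / (2 * β ^ 2) := ⟨_, rfl⟩
  have hb0 : 0 < b := by rw [hb]; positivity
  have hcb : 2 * c ^ 2 * β ^ 2 * b = σ ^ 2 := by rw [← hcD, hb]; field_simp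
  have hf : fN β σ a N = β * b * x ^ 2 := by
    rw [fN, hlx, hb]; field_simp; ring
  have hT : TN β σ a N k = x ^ 2 * (b + k / x) := by
    rw [TN, hf, ← hx]; field_simp
  rw [hittingDensity, hT, hf, ← hx, ← hc, ← hb, Gx]
  obtain ⟨w, hw⟩ : ∃ w, w = b + k / x := ⟨_, rfl⟩
  rw [← hw]
  rcases le_or_gt w 0 with h | h
  · rw [rpow_neg_zero (inv_nonpos.2 h), rpow_neg_zero (mul_nonpos_of_nonneg_of_nonpos (by positivity) h)]
    simp
  have hkw : k = x * (w - b) := by rw [hw]; field_simp; ring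
  have hpow : (x ^ 2 * w) ^ ((3 : ℝ) / 2) = x ^ 3 * w ^ ((3 : ℝ) / 2) := by
    rw [Real.mul_rpow (by positivity) h.le]
    congr 1
    rw [← Real.rpow_natCast, ← Real.rpow_mul hx0.le, ← Real.rpow_natCast]; norm_num
  rw [hpow, Real.inv_rpow h.le]
  have hwp : 0 < w ^ ((3 : ℝ) / 2) := Real.rpow_pos_of_pos h _
  have hE : (N : ℝ) * Real.exp (-(c * (β * b * x ^ 2) - r + c * β * (x ^ 2 * w)) ^ 2 /
      (2 * σ ^ 2 * (x ^ 2 * w))) = Real.exp (2 * c * β * r / σ ^ 2) *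
      Real.exp (-((r / x + c * β * k) ^ 2 * w⁻¹ / (2 * σ ^ 2))) := by
    rw [hNx, ← Real.exp_add, ← Real.exp_add]
    congr 1
    rw [hkw]
    field_simp
    linear_combination (-2 * x ^ 4 * w) * hcb
  have hs : 0 < Real.sqrt (2 * π) := by positivity
  have hP : x * ((c * (β * b * x ^ 2) - r) / (Real.sqrt (2 * π) * σ * (x ^ 3 * w ^ ((3 : ℝ) / 2)))) =
      (c * β * b - r / x ^ 2) / (Real.sqrt (2 * π) * σ) * (w ^ ((3 : ℝ) / 2))⁻¹ := by
    field_simp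
  rw [mul_comm (N : ℝ) x]
  calc _ = (x * ((c * (β * b * x ^ 2) - r) / (Real.sqrt (2 * π) * σ * (x ^ 3 * w ^ ((3 : ℝ) / 2))))) *
      ((N : ℝ) * Real.exp (-(c * (β * b * x ^ 2) - r + c * β * (x ^ 2 * w)) ^ 2 /
      (2 * σ ^ 2 * (x ^ 2 * w)))) := by ring
    _ = _ := by rw [hE, hP]; ring

/-- **Interchange of limit and integral for the scaled hitting-time density:**
`lim_{N→∞} ∫ N √(log N) g_N(T_N(a,k)) dk = ∫ lim_{N→∞} N √(log N) g_N(T_N(a,k)) dk`,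
and both sides equal `exp(2(1-λ(a))βr/σ²)`. -/
theorem hittingDensity_interchange_limit_integral
    (a r β σ σA : ℝ) (ha : 0 < a) (hβ : 0 < β) (hσ : 0 < σ) (hσA : 0 < σA) :
    ∃ L : ℝ → ℝ,
      (∀ k : ℝ, Tendsto (fun N : ℕ =>
          (N : ℝ) * Real.sqrt (Real.log N) * hittingDensity β σ a r N (TN β σ a N k))
        atTop (𝓝 (L k))) ∧
      Tendsto (fun N : ℕ =>
          ∫ k : ℝ, (N : ℝ) * Real.sqrt (Real.log N) * hittingDensity β σ a r N (TN β σ a N k))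
        atTop (𝓝 (∫ k : ℝ, L k)) ∧
      (∫ k : ℝ, L k) = Real.exp (2 * (1 - lam β σ a) * β * r / σ ^ 2) := by
  obtain ⟨q, hq⟩ : ∃ q, q = (1 - lam β σ a) * β := ⟨_, rfl⟩
  obtain ⟨b, hb⟩ : ∃ b, b = (2 * a * β + σ ^ 2) / (2 * β ^ 2) := ⟨_, rfl⟩
  have hD : 0 < 2 * a * β + σ ^ 2 := by positivity
  have hb0 : 0 < b := by rw [hb]; positivity
  have hq0 : 0 < q := by
    rw [hq, lam, sub_sub_cancel]
    have := Real.sqrt_pos.2 hD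
    positivity
  set E := Real.exp (2 * (1 - lam β σ a) * β * r / σ ^ 2) with hE
  have hx : Tendsto (fun N : ℕ => Real.sqrt (Real.log N)) atTop atTop :=
    Real.tendsto_sqrt_atTop.comp (Real.tendsto_log_atTop.comp tendsto_natCast_atTop_atTop)
  have heq : ∀ᶠ N : ℕ in atTop, ∀ k : ℝ,
      E * Gx q b r σ (Real.sqrt (Real.log N)) k =
      (N : ℝ) * Real.sqrt (Real.log N) * hittingDensity β σ a r N (TN β σ a N k) := by
    filter_upwards [eventually_ge_atTop 2] with N hN k
    rw [density_eq a r β σ ha hβ hσ N hN k, hq, hb]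
  obtain ⟨C, κ, X, hκ, hbd⟩ := Gx_bound q b r σ hq0 hb0 hσ
  have hlim : ∀ k, Tendsto (fun N : ℕ => E * Gx q b r σ (Real.sqrt (Real.log N)) k) atTop
      (𝓝 (E * (q * b / (Real.sqrt (2 * π) * σ) * (b⁻¹) ^ ((3 : ℝ) / 2) *
        Real.exp (-((q * k) ^ 2 * b⁻¹ / (2 * σ ^ 2)))))) := fun k =>
    ((Gx_tendsto q b r σ k hb0).comp hx).const_mul E
  refine ⟨fun k => E * (q * b / (Real.sqrt (2 * π) * σ) * (b⁻¹) ^ ((3 : ℝ) / 2) *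
        Real.exp (-((q * k) ^ 2 * b⁻¹ / (2 * σ ^ 2)))), fun k => ?_, ?_, ?_⟩
  · exact (hlim k).congr' (heq.mono fun N h => h k)
  · have key : Tendsto (fun N : ℕ => ∫ k : ℝ, E * Gx q b r σ (Real.sqrt (Real.log N)) k) atTop
        (𝓝 (∫ k : ℝ, E * (q * b / (Real.sqrt (2 * π) * σ) * (b⁻¹) ^ ((3 : ℝ) / 2) *
        Real.exp (-((q * k) ^ 2 * b⁻¹ / (2 * σ ^ 2)))))) := by
      refine tendsto_integral_filter_of_dominated_convergence
        (fun k => E * (C * Real.exp (-κ * |k|))) ?_ ?_ ?_ ?_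
      · refine Eventually.of_forall fun N => Measurable.aestronglyMeasurable ?_
        unfold Gx
        fun_prop
      · filter_upwards [hx.eventually_ge_atTop X] with N hN
        refine Eventually.of_forall fun k => ?_
        rw [norm_mul, Real.norm_eq_abs E, abs_of_pos (Real.exp_pos _)]
        exact mul_le_mul_of_nonneg_left (hbd _ hN k) (Real.exp_pos _).le
      · refine Integrable.const_mul (Integrable.const_mul ?_ _) _
        exact integrable_exp_neg_mul_abs hκ
      · exact Eventually.of_forall hlim
    refine key.congr' (heq.mono fun N h => ?_)
    exact integral_congr_ae (Eventually.of_forall h)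
  · rw [integral_const_mul, Gx_limit_integral q b σ hq0 hb0 hσ, mul_one]

end
end
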